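/- Let (Ω_n, P_n, π_n) be a sequence of finite irreducible reversible Markov chains. The sequence exhibits a continuous-time cutoff if and only if it exhibits a lazy cutoff. -/

import Mathlib

open Matrix Filter Asymptotics

/-- `P` is a stochastic matrix. -/
def IsStochastic {Ω : Type*} [Fintype Ω] (P : Matrix Ω Ω ℝ) : Prop :=
  (∀ x y, 0 ≤ P x y) ∧ ∀ x, ∑ y, P x y = 1

/-- `P` is irreducible. -/
def IsIrreducibleMatrix {Ω : Type*} [Fintype Ω] [DecidableEq Ω] (P : Matrix Ω Ω ℝ) : Prop :=
  ∀ x y, ∃ n : ℕ, 0 < (P ^ n) x y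

/-- `μ` is a probability vector. -/
def IsProbVec {Ω : Type*} [Fintype Ω] (μ : Ω → ℝ) : Prop :=
  (∀ x, 0 ≤ μ x) ∧ ∑ x, μ x = 1

/-- The chain `(P, pi)` is reversible. -/
def IsReversible {Ω : Type*} [Fintype Ω] (P : Matrix Ω Ω ℝ) (pi : Ω → ℝ) : Prop :=
  ∀ x y, pi x * P x y = pi y * P y x

/-- A finite irreducible Markov chain `P` with stationary distribution `pi`. -/
def IsMC {Ω : Type*} [Fintype Ω] [DecidableEq Ω] (P : Matrix Ω Ω ℝ) (pi : Ω → ℝ) : Prop :=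
  IsStochastic P ∧ IsIrreducibleMatrix P ∧ IsProbVec pi ∧ pi ᵥ* P = pi

/-- A finite irreducible reversible Markov chain `P` with stationary distribution `pi`. -/
def IsRevMC {Ω : Type*} [Fintype Ω] [DecidableEq Ω] (P : Matrix Ω Ω ℝ) (pi : Ω → ℝ) : Prop :=
  IsMC P pi ∧ IsReversible P pi

/-- Total-variation distance between two measures on a finite set. -/
noncomputable def tvDist {Ω : Type*} [Fintype Ω] (μ ν : Ω → ℝ) : ℝ :=
  (∑ x, |μ x - ν x|) / 2

/-- The lazy version `(I + P)/2` of `P`. -/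
noncomputable def lazyM {Ω : Type*} [Fintype Ω] [DecidableEq Ω] (P : Matrix Ω Ω ℝ) :
    Matrix Ω Ω ℝ :=
  (2 : ℝ)⁻¹ • (1 + P)

/-- `d_c(t, μ)`: TV distance from stationarity of the continuous-time chain at time `t`,
started from `μ`. -/
noncomputable def contDist {Ω : Type*} [Fintype Ω] [DecidableEq Ω] (P : Matrix Ω Ω ℝ) (pi : Ω → ℝ)
    (t : ℝ) (μ : Ω → ℝ) : ℝ :=
  tvDist (fun y => ∑' k : ℕ, Real.exp (-t) * t ^ k / (Nat.factorial k) * (μ ᵥ* (P ^ k)) y) pi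

/-- `d_L(t, μ)`: TV distance from stationarity of the lazy chain at (discrete) time `t`,
started from `μ`. -/
noncomputable def lazyDist {Ω : Type*} [Fintype Ω] [DecidableEq Ω] (P : Matrix Ω Ω ℝ)
    (pi : Ω → ℝ) (t : ℝ) (μ : Ω → ℝ) : ℝ :=
  tvDist (μ ᵥ* (lazyM P ^ ⌊t⌋₊)) pi

/-- `d_ave(t, μ)`: TV distance from stationarity of the averaged chain at (discrete) time `t`,
started from `μ`. -/
noncomputable def aveDist {Ω : Type*} [Fintype Ω] [DecidableEq Ω] (P : Matrix Ω Ω ℝ) (pi : Ω → ℝ)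
    (t : ℝ) (μ : Ω → ℝ) : ℝ :=
  tvDist (fun y => ((μ ᵥ* (P ^ ⌊t⌋₊)) y + (μ ᵥ* (P ^ (⌊t⌋₊ + 1))) y) / 2) pi

/-- The point mass at `x`. -/
noncomputable def deltaMass {Ω : Type*} [DecidableEq Ω] (x : Ω) : Ω → ℝ :=
  fun y => if y = x then 1 else 0

/-- Worst-case continuous-time distance `d_c(t)`. -/
noncomputable def contDistMax {Ω : Type*} [Fintype Ω] [DecidableEq Ω] (P : Matrix Ω Ω ℝ)
    (pi : Ω → ℝ) (t : ℝ) : ℝ :=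
  ⨆ x : Ω, contDist P pi t (deltaMass x)

/-- Worst-case lazy distance `d_L(t)`. -/
noncomputable def lazyDistMax {Ω : Type*} [Fintype Ω] [DecidableEq Ω] (P : Matrix Ω Ω ℝ)
    (pi : Ω → ℝ) (t : ℝ) : ℝ :=
  ⨆ x : Ω, lazyDist P pi t (deltaMass x)

/-- Worst-case averaged distance `d_ave(t)`. -/
noncomputable def aveDistMax {Ω : Type*} [Fintype Ω] [DecidableEq Ω] (P : Matrix Ω Ω ℝ)
    (pi : Ω → ℝ) (t : ℝ) : ℝ :=
  ⨆ x : Ω, aveDist P pi t (deltaMass x)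

/-- `φ_{α,C}(t) = t + ⌈C t^{(1+2α)/2} √(α log t)⌉`. -/
noncomputable def phiAC (α C t : ℝ) : ℝ :=
  t + ((⌈C * t ^ ((1 + 2 * α) / 2) * Real.sqrt (α * Real.log t)⌉ : ℤ) : ℝ)

/-- `ψ_{α,C}(x) = min (1, x + C |log(2x)|^{-α})`. -/
noncomputable def psiAC (α C x : ℝ) : ℝ :=
  min 1 (x + C * |Real.log (2 * x)| ^ (-α))

/-- `t_c(ε)`, the `ε`-mixing time of the continuous-time chain. -/
noncomputable def contMix {Ω : Type*} [Fintype Ω] [DecidableEq Ω] (P : Matrix Ω Ω ℝ)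
    (pi : Ω → ℝ) (ε : ℝ) : ℝ :=
  sInf {t : ℝ | 0 ≤ t ∧ contDistMax P pi t ≤ ε}

/-- `t_L(ε)`, the `ε`-mixing time of the lazy chain. -/
noncomputable def lazyMix {Ω : Type*} [Fintype Ω] [DecidableEq Ω] (P : Matrix Ω Ω ℝ)
    (pi : Ω → ℝ) (ε : ℝ) : ℕ :=
  sInf {t : ℕ | lazyDistMax P pi t ≤ ε}

/-- `t_ave(ε)`, the `ε`-mixing time of the averaged chain. -/
noncomputable def aveMix {Ω : Type*} [Fintype Ω] [DecidableEq Ω] (P : Matrix Ω Ω ℝ)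
    (pi : Ω → ℝ) (ε : ℝ) : ℕ :=
  sInf {t : ℕ | aveDistMax P pi t ≤ ε}

/-- The sequence of continuous-time chains exhibits cutoff. -/
def ContCutoff {Ω : ℕ → Type} [∀ n, Fintype (Ω n)] [∀ n, DecidableEq (Ω n)]
    (P : ∀ n, Matrix (Ω n) (Ω n) ℝ) (pi : ∀ n, Ω n → ℝ) : Prop :=
  ∀ ε : ℝ, 0 < ε → ε < 1 →
    Tendsto (fun n => contMix (P n) (pi n) ε / contMix (P n) (pi n) (1 - ε)) atTop (nhds 1)

/-- The sequence of lazy chains exhibits cutoff. -/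
def LazyCutoff {Ω : ℕ → Type} [∀ n, Fintype (Ω n)] [∀ n, DecidableEq (Ω n)]
    (P : ∀ n, Matrix (Ω n) (Ω n) ℝ) (pi : ∀ n, Ω n → ℝ) : Prop :=
  ∀ ε : ℝ, 0 < ε → ε < 1 →
    Tendsto (fun n => (lazyMix (P n) (pi n) ε : ℝ) / (lazyMix (P n) (pi n) (1 - ε) : ℝ))
      atTop (nhds 1)

/-- The sequence of averaged chains exhibits cutoff. -/
def AveCutoff {Ω : ℕ → Type} [∀ n, Fintype (Ω n)] [∀ n, DecidableEq (Ω n)]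
    (P : ∀ n, Matrix (Ω n) (Ω n) ℝ) (pi : ∀ n, Ω n → ℝ) : Prop :=
  ∀ ε : ℝ, 0 < ε → ε < 1 →
    Tendsto (fun n => (aveMix (P n) (pi n) ε : ℝ) / (aveMix (P n) (pi n) (1 - ε) : ℝ))
      atTop (nhds 1)

/-- The sequence of continuous-time chains exhibits cutoff with window `w`. -/
def ContCutoffWindow {Ω : ℕ → Type} [∀ n, Fintype (Ω n)] [∀ n, DecidableEq (Ω n)]
    (P : ∀ n, Matrix (Ω n) (Ω n) ℝ) (pi : ∀ n, Ω n → ℝ) (w : ℕ → ℝ) : Prop :=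
  ContCutoff P pi ∧
  (fun n => w n) =o[atTop] (fun n => contMix (P n) (pi n) (1 / 4)) ∧
  ∀ ε : ℝ, 0 < ε → ε ≤ 1 / 4 → ∃ Cε : ℝ, 0 < Cε ∧
    ∀ n, contMix (P n) (pi n) ε - contMix (P n) (pi n) (1 - ε) ≤ Cε * w n

/-- The sequence of averaged chains exhibits cutoff with window `w`. -/
def AveCutoffWindow {Ω : ℕ → Type} [∀ n, Fintype (Ω n)] [∀ n, DecidableEq (Ω n)]
    (P : ∀ n, Matrix (Ω n) (Ω n) ℝ) (pi : ∀ n, Ω n → ℝ) (w : ℕ → ℝ) : Prop :=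
  AveCutoff P pi ∧
  (fun n => w n) =o[atTop] (fun n => (aveMix (P n) (pi n) (1 / 4) : ℝ)) ∧
  ∀ ε : ℝ, 0 < ε → ε ≤ 1 / 4 → ∃ Cε : ℝ, 0 < Cε ∧
    ∀ n, (aveMix (P n) (pi n) ε : ℝ) - (aveMix (P n) (pi n) (1 - ε) : ℝ) ≤ Cε * w n

/-!
Let `Q = (I + P) / 2`. In its own time scale the continuous-time chain is
`H_t = e^{2t (Q - I)}`, the mixture of the powers `Q^m` with `m` of Poisson law of mean `2t`, and a
Poisson variable of large mean is concentrated around it. As `m ↦ ‖δ_x Q^m - π‖` is decreasing,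
Chebyshev's inequality bounds the continuous-time distance by the lazy distance at a slightly
earlier time.

Conversely, the lazy distance has to be bounded by an average over the fluctuations of `m`. Here
reversibility and laziness enter: `Q` is self-adjoint with `0 ≤ Q ≤ 1` in `ℓ²(π)`, so for `f` of
mean zero the sequence `⟨f, Q^n f⟩` is completely monotone. At times `J` of the order of the mixing
time it is at most a small `β²`, and then the increments of `j ↦ Q^j f` have norm at most `β / J`
once `j ≥ 2J`. Hence the maximal function of this trajectory over a window of length comparable to
`J` has small mean, and the fluctuations of `m` within such a window are harmless.
-/

section PoissonWeight

/-- The mass `e^{-l} l^m / m!` that the Poisson law of mean `l` gives to `m`, as a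
polynomial-exponential expression in a real parameter, so that identities need no sign condition. -/
noncomputable def poissonWeight (l : ℝ) (m : ℕ) : ℝ :=
  Real.exp (-l) * l ^ m / m.factorial

lemma poissonWeight_nonneg {l : ℝ} (hl : 0 ≤ l) (m : ℕ) : 0 ≤ poissonWeight l m := by
  unfold poissonWeight; positivity

lemma hasSum_poissonWeight (l : ℝ) : HasSum (poissonWeight l) 1 := by
  have h := (NormedSpace.expSeries_div_hasSum_exp (𝔸 := ℝ) l).mul_left (Real.exp (-l))
  rw [← Real.exp_eq_exp_ℝ, ← Real.exp_add, neg_add_cancel, Real.exp_zero] at h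
  exact h.congr_fun fun m => mul_div_assoc ..

lemma poissonWeight_succ_mul_succ (l : ℝ) (m : ℕ) :
    poissonWeight l (m + 1) * (m + 1) = l * poissonWeight l m := by
  simp only [poissonWeight, Nat.factorial_succ, Nat.cast_mul, Nat.cast_succ]
  field_simp
  exact pow_succ' l m

lemma hasSum_poissonWeight_mul_natCast (l : ℝ) :
    HasSum (fun m : ℕ => poissonWeight l m * m) l := by
  have h : HasSum (fun m : ℕ => poissonWeight l (m + 1) * (m + 1 : ℕ)) (l * 1) :=
    ((hasSum_poissonWeight l).mul_left l).congr_fun fun m => by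
      rw [Nat.cast_succ, poissonWeight_succ_mul_succ]
  simpa using h.zero_add (f := fun m : ℕ => poissonWeight l m * m)

lemma hasSum_poissonWeight_mul_sq (l : ℝ) :
    HasSum (fun m : ℕ => poissonWeight l m * (m : ℝ) ^ 2) (l * (l + 1)) := by
  have h : HasSum (fun m : ℕ => poissonWeight l (m + 1) * (m + 1 : ℕ) ^ 2) (l * (l + 1)) :=
    (((hasSum_poissonWeight_mul_natCast l).add (hasSum_poissonWeight l)).mul_left l).congr_fun
      fun m => by
        push_cast
        linear_combination ((m : ℝ) + 1) * poissonWeight_succ_mul_succ l m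
  simpa using h.zero_add (f := fun m : ℕ => poissonWeight l m * (m : ℝ) ^ 2)

lemma hasSum_poissonWeight_mul_sub_sq (l : ℝ) :
    HasSum (fun m : ℕ => poissonWeight l m * ((m : ℝ) - l) ^ 2) l := by
  have h := ((hasSum_poissonWeight_mul_sq l).sub
    ((hasSum_poissonWeight_mul_natCast l).mul_left (2 * l))).add
    ((hasSum_poissonWeight l).mul_left (l ^ 2))
  rw [show l * (l + 1) - 2 * l * l + l ^ 2 * 1 = l by ring] at h
  exact h.congr_fun fun m => by ring

lemma le_add_div_sq_of_hasSum_poissonWeight {l s a b : ℝ} {φ : ℕ → ℝ} (hl : 0 ≤ l)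
    (hφ : HasSum (fun m => poissonWeight l m * φ m) a)
    (hb : ∀ m : ℕ, b ≤ φ m + ((m : ℝ) - l) ^ 2 / s ^ 2) : b ≤ a + l / s ^ 2 := by
  have hlow := (hasSum_poissonWeight l).mul_right b
  have hupp := hφ.add ((hasSum_poissonWeight_mul_sub_sq l).div_const (s ^ 2))
  rw [one_mul] at hlow
  refine hasSum_le (fun m => ?_) hlow hupp
  rw [mul_div_assoc, ← mul_add]
  exact mul_le_mul_of_nonneg_left (hb m) (poissonWeight_nonneg hl m)

end PoissonWeight

section Stochastic

variable {Ω : Type*} [Fintype Ω] {P M : Matrix Ω Ω ℝ} {pi : Ω → ℝ}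

lemma dotProduct_mulVec_of_vecMul_eq (hM : pi ᵥ* M = pi) (f : Ω → ℝ) :
    pi ⬝ᵥ (M *ᵥ f) = pi ⬝ᵥ f := by
  rw [dotProduct_mulVec, hM]

lemma IsReversible.vecMul_eq (hR : IsReversible P pi) (hP : IsStochastic P) : pi ᵥ* P = pi := by
  ext y
  calc ∑ x, pi x * P x y = ∑ x, pi y * P y x := Finset.sum_congr rfl fun x _ => hR x y
    _ = pi y := by rw [← Finset.mul_sum, hP.2, mul_one]

lemma IsProbVec.dotProduct_le (hpi : IsProbVec pi) {f : Ω → ℝ} {c : ℝ} (hf : ∀ x, f x ≤ c) :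
    pi ⬝ᵥ f ≤ c :=
  calc ∑ x, pi x * f x ≤ ∑ x, pi x * c :=
        Finset.sum_le_sum fun x _ => mul_le_mul_of_nonneg_left (hf x) (hpi.1 x)
    _ = c := by rw [← Finset.sum_mul, hpi.2, one_mul]

lemma IsProbVec.le_dotProduct (hpi : IsProbVec pi) {f : Ω → ℝ} {c : ℝ} (hf : ∀ x, c ≤ f x) :
    c ≤ pi ⬝ᵥ f := by
  simpa using hpi.dotProduct_le (f := -f) (c := -c) fun x => neg_le_neg (hf x)

lemma IsProbVec.nonempty (hpi : IsProbVec pi) : Nonempty Ω := by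
  by_contra h
  have := not_nonempty_iff.1 h
  simpa using hpi.2

lemma isStochastic_iff_mem_rowStochastic [DecidableEq Ω] :
    IsStochastic P ↔ P ∈ rowStochastic ℝ Ω :=
  mem_rowStochastic_iff_sum.symm

lemma IsStochastic.mul (hP : IsStochastic P) (hM : IsStochastic M) : IsStochastic (P * M) := by
  classical
  exact isStochastic_iff_mem_rowStochastic.2 (mul_mem (isStochastic_iff_mem_rowStochastic.1 hP)
    (isStochastic_iff_mem_rowStochastic.1 hM))

lemma IsStochastic.isProbVec_row (hP : IsStochastic P) (x : Ω) : IsProbVec (P x) :=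
  ⟨hP.1 x, hP.2 x⟩

lemma IsStochastic.mulVec_mem_Icc (hP : IsStochastic P) {g : Ω → ℝ} (hg : g ∈ Set.Icc 0 1) :
    P *ᵥ g ∈ Set.Icc 0 1 :=
  ⟨fun x => (hP.isProbVec_row x).le_dotProduct hg.1,
    fun x => (hP.isProbVec_row x).dotProduct_le hg.2⟩

lemma IsStochastic.mulVec_sub_const (hP : IsStochastic P) (f : Ω → ℝ) (c : ℝ) :
    P *ᵥ (fun x => f x - c) = fun x => (P *ᵥ f) x - c := by
  ext x
  simp only [mulVec, dotProduct, mul_sub, Finset.sum_sub_distrib, ← Finset.sum_mul, hP.2, one_mul]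

variable [DecidableEq Ω]

lemma isStochastic_one : IsStochastic (1 : Matrix Ω Ω ℝ) :=
  isStochastic_iff_mem_rowStochastic.2 (one_mem _)

lemma IsStochastic.pow (hP : IsStochastic P) (m : ℕ) : IsStochastic (P ^ m) :=
  isStochastic_iff_mem_rowStochastic.2 (pow_mem (isStochastic_iff_mem_rowStochastic.1 hP) m)

lemma vecMul_pow_of_vecMul_eq (hM : pi ᵥ* M = pi) (m : ℕ) : pi ᵥ* M ^ m = pi := by
  induction m with
  | zero => rw [pow_zero, vecMul_one]
  | succ m ih => rw [pow_succ, ← vecMul_vecMul, ih, hM]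

lemma lazyM_apply (x y : Ω) :
    lazyM P x y = (2 : ℝ)⁻¹ * ((1 : Matrix Ω Ω ℝ) x y + P x y) :=
  rfl

lemma lazyM_mulVec (f : Ω → ℝ) : lazyM P *ᵥ f = (2 : ℝ)⁻¹ • (f + P *ᵥ f) := by
  rw [lazyM, smul_mulVec, add_mulVec, one_mulVec]

lemma IsStochastic.lazyM (hP : IsStochastic P) : IsStochastic (lazyM P) := by
  rw [isStochastic_iff_mem_rowStochastic] at hP ⊢
  rw [_root_.lazyM, smul_add]
  exact convex_rowStochastic (one_mem (rowStochastic ℝ Ω)) hP (by norm_num) (by norm_num)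
    (by norm_num)

lemma IsReversible.lazyM (hR : IsReversible P pi) : IsReversible (lazyM P) pi := by
  intro x y
  have hone : pi x * (1 : Matrix Ω Ω ℝ) x y = pi y * (1 : Matrix Ω Ω ℝ) y x := by
    by_cases hxy : x = y
    · rw [hxy]
    · rw [one_apply_ne hxy, one_apply_ne (Ne.symm hxy), mul_zero, mul_zero]
  rw [lazyM_apply, lazyM_apply]
  linear_combination (2 : ℝ)⁻¹ * (hone + hR x y)

lemma IsStochastic.pow_apply_self_le (hP : IsStochastic P) (m : ℕ) (x : Ω) :
    P x x ^ m ≤ (P ^ m) x x := by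
  induction m with
  | zero => simp
  | succ m ih =>
    calc P x x ^ (m + 1) = P x x ^ m * P x x := pow_succ _ _
      _ ≤ (P ^ m) x x * P x x := mul_le_mul_of_nonneg_right ih (hP.1 x x)
      _ ≤ (P ^ (m + 1)) x x := by
        rw [pow_succ, mul_apply]
        exact Finset.single_le_sum (f := fun y => (P ^ m) x y * P y x)
          (fun y _ => mul_nonneg ((hP.pow m).1 x y) (hP.1 y x)) (Finset.mem_univ x)

lemma half_le_lazyM_apply_self (hP : IsStochastic P) (x : Ω) :
    (1 / 2 : ℝ) ≤ lazyM P x x := by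
  rw [lazyM_apply, one_apply_eq]
  linarith [hP.1 x x]

end Stochastic

section HeatKernel

variable {Ω : Type*} [Fintype Ω] [DecidableEq Ω] {P : Matrix Ω Ω ℝ} {pi : Ω → ℝ} {t : ℝ}

/-- The transition matrix `H_t = e^{t (P - I)}` of the continuous-time chain that takes the jumps of
`P` at rate one. -/
noncomputable def heatKernel (P : Matrix Ω Ω ℝ) (t : ℝ) : Matrix Ω Ω ℝ :=
  NormedSpace.exp (t • (P - 1))

lemma heatKernel_add (P : Matrix Ω Ω ℝ) (s t : ℝ) :
    heatKernel P (s + t) = heatKernel P s * heatKernel P t := by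
  rw [heatKernel, add_smul]
  exact exp_add_of_commute _ _ (((Commute.refl _).smul_left s).smul_right t)

lemma heatKernel_zero (P : Matrix Ω Ω ℝ) : heatKernel P 0 = 1 := by
  rw [heatKernel, zero_smul, NormedSpace.exp_zero]

lemma heatKernel_lazyM (P : Matrix Ω Ω ℝ) (t : ℝ) :
    heatKernel (lazyM P) (2 * t) = heatKernel P t := by
  have h : (2 * t) • (lazyM P - 1) = t • (P - 1) := by
    rw [lazyM]
    module
  rw [heatKernel, h, heatKernel]

lemma heatKernel_eq_exp_smul (P : Matrix Ω Ω ℝ) (t : ℝ) :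
    heatKernel P t = Real.exp (-t) • NormedSpace.exp (t • P) := by
  have hexp : NormedSpace.exp (-t • (1 : Matrix Ω Ω ℝ)) = Real.exp (-t) • 1 := by
    rw [smul_one_eq_diagonal, exp_diagonal, smul_one_eq_diagonal]
    congr 1
    funext x
    rw [Pi.coe_exp, Real.exp_eq_exp_ℝ]
  have hsplit : t • (P - 1) = -t • (1 : Matrix Ω Ω ℝ) + t • P := by module
  rw [heatKernel, hsplit, exp_add_of_commute _ _ (((Commute.one_left P).smul_left _).smul_right t),
    hexp, smul_mul_assoc, one_mul]

section

attribute [local instance] Matrix.linftyOpNormedRing Matrix.linftyOpNormedAlgebra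

lemma hasSum_heatKernel (P : Matrix Ω Ω ℝ) (t : ℝ) :
    HasSum (fun m => poissonWeight t m • P ^ m) (heatKernel P t) := by
  rw [heatKernel_eq_exp_smul]
  refine ((NormedSpace.exp_series_hasSum_exp' (𝕂 := ℝ) (t • P)).const_smul
    (Real.exp (-t))).congr_fun fun m => ?_
  rw [smul_pow, smul_smul, smul_smul, poissonWeight]
  ring_nf

end

lemma hasSum_heatKernel_apply (P : Matrix Ω Ω ℝ) (t : ℝ) (x y : Ω) :
    HasSum (fun m => poissonWeight t m * (P ^ m) x y) (heatKernel P t x y) :=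
  Pi.hasSum.1 (Pi.hasSum.1 (hasSum_heatKernel P t) x) y

lemma hasSum_heatKernel_mulVec (P : Matrix Ω Ω ℝ) (t : ℝ) (f : Ω → ℝ) (x : Ω) :
    HasSum (fun m => poissonWeight t m * (P ^ m *ᵥ f) x) ((heatKernel P t *ᵥ f) x) := by
  refine (hasSum_sum fun y _ => (hasSum_heatKernel_apply P t x y).mul_right (f y)).congr_fun
    fun m => ?_
  simp only [mulVec, dotProduct, Finset.mul_sum, mul_assoc]

lemma IsStochastic.heatKernel (hP : IsStochastic P) (ht : 0 ≤ t) :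
    IsStochastic (heatKernel P t) := by
  refine ⟨fun x y => (hasSum_heatKernel_apply P t x y).nonneg fun m =>
    mul_nonneg (poissonWeight_nonneg ht m) ((hP.pow m).1 x y), fun x => ?_⟩
  refine (hasSum_sum fun y _ => hasSum_heatKernel_apply P t x y).unique
    ((hasSum_poissonWeight t).congr_fun fun m => ?_)
  rw [← Finset.mul_sum, (hP.pow m).2, mul_one]

lemma vecMul_heatKernel_of_vecMul_eq (hP : pi ᵥ* P = pi) (t : ℝ) :
    pi ᵥ* heatKernel P t = pi := by
  ext y
  refine (hasSum_sum fun x _ => (hasSum_heatKernel_apply P t x y).mul_left (pi x)).unique ?_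
  have h := (hasSum_poissonWeight t).mul_right (pi y)
  rw [one_mul] at h
  refine h.congr_fun fun m => ?_
  have hm : ∑ x, pi x * (P ^ m) x y = pi y := congr_fun (vecMul_pow_of_vecMul_eq hP m) y
  simp only [mul_left_comm (pi _), ← Finset.mul_sum, hm]

lemma exp_neg_le_heatKernel_apply_self (hP : IsStochastic P) (ht : 0 ≤ t) (x : Ω) :
    Real.exp (-t) ≤ heatKernel P t x x := by
  have h := le_hasSum (hasSum_heatKernel_apply P t x x) 0 fun m _ =>
    mul_nonneg (poissonWeight_nonneg ht m) ((hP.pow m).1 x x)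
  simpa [poissonWeight] using h

end HeatKernel

section TotalVariation

variable {Ω : Type*} [Fintype Ω] {K M : Matrix Ω Ω ℝ} {μ ν pi g : Ω → ℝ} {c : ℝ}

lemma tvDist_nonneg (μ ν : Ω → ℝ) : 0 ≤ tvDist μ ν := by
  unfold tvDist; positivity

lemma abs_dotProduct_sub_le_tvDist (hμ : IsProbVec μ) (hν : IsProbVec ν)
    (hg : g ∈ Set.Icc 0 1) : |μ ⬝ᵥ g - ν ⬝ᵥ g| ≤ tvDist μ ν := by
  have hcenter : μ ⬝ᵥ g - ν ⬝ᵥ g = ∑ x, (μ x - ν x) * (g x - 1 / 2) := by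
    simp only [dotProduct, mul_sub, sub_mul, Finset.sum_sub_distrib, ← Finset.sum_mul, hμ.2, hν.2]
    ring
  have hhalf (x : Ω) : |g x - 1 / 2| ≤ 1 / 2 := by
    have h0 : 0 ≤ g x := hg.1 x
    have h1 : g x ≤ 1 := hg.2 x
    rw [abs_le]
    constructor <;> linarith
  calc |μ ⬝ᵥ g - ν ⬝ᵥ g| ≤ ∑ x, |(μ x - ν x) * (g x - 1 / 2)| :=
        hcenter ▸ Finset.abs_sum_le_sum_abs _ _
    _ ≤ ∑ x, |μ x - ν x| * (1 / 2) := Finset.sum_le_sum fun x _ => by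
        rw [abs_mul]
        exact mul_le_mul_of_nonneg_left (hhalf x) (abs_nonneg _)
    _ = tvDist μ ν := by rw [← Finset.sum_mul, tvDist, mul_one_div]

lemma tvDist_le (hμ : IsProbVec μ) (hν : IsProbVec ν)
    (h : ∀ g ∈ Set.Icc (0 : Ω → ℝ) 1, μ ⬝ᵥ g - ν ⬝ᵥ g ≤ c) : tvDist μ ν ≤ c := by
  let g : Ω → ℝ := fun x => if ν x ≤ μ x then 1 else 0
  have hg : g ∈ Set.Icc 0 1 := by
    constructor <;> intro x <;> by_cases hx : ν x ≤ μ x <;> simp [g, hx]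
  have habs (x : Ω) : |μ x - ν x| = 2 * (μ x * g x - ν x * g x) - (μ x - ν x) := by
    by_cases hx : ν x ≤ μ x
    · rw [abs_of_nonneg (sub_nonneg.2 hx)]
      simp only [g, hx, if_true]
      ring
    · rw [abs_of_neg (sub_neg.2 (not_le.1 hx))]
      simp only [g, hx, if_false]
      ring
  refine le_of_eq_of_le ?_ (h g hg)
  simp only [tvDist, habs, dotProduct, Finset.sum_sub_distrib, ← Finset.mul_sum, hμ.2, hν.2]
  ring

/-- The worst-case total-variation distance between the rows of `K` and `pi`. -/
noncomputable def maxDist (K : Matrix Ω Ω ℝ) (pi : Ω → ℝ) : ℝ :=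
  ⨆ x, tvDist (K x) pi

lemma maxDist_nonneg (K : Matrix Ω Ω ℝ) (pi : Ω → ℝ) : 0 ≤ maxDist K pi :=
  Real.iSup_nonneg fun _ => tvDist_nonneg _ _

lemma abs_mulVec_sub_le_maxDist (hK : IsStochastic K) (hpi : IsProbVec pi)
    (hg : g ∈ Set.Icc 0 1) (x : Ω) : |(K *ᵥ g) x - pi ⬝ᵥ g| ≤ maxDist K pi :=
  (abs_dotProduct_sub_le_tvDist (hK.isProbVec_row x) hpi hg).trans
    (le_ciSup (f := fun x => tvDist (K x) pi) (Set.finite_range _).bddAbove x)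

lemma maxDist_le (hK : IsStochastic K) (hpi : IsProbVec pi)
    (h : ∀ g ∈ Set.Icc (0 : Ω → ℝ) 1, ∀ x, (K *ᵥ g) x - pi ⬝ᵥ g ≤ c) : maxDist K pi ≤ c :=
  have := hpi.nonempty
  ciSup_le fun x => tvDist_le (hK.isProbVec_row x) hpi fun g hg => h g hg x

lemma maxDist_le_one (hK : IsStochastic K) (hpi : IsProbVec pi) : maxDist K pi ≤ 1 :=
  maxDist_le hK hpi fun g hg x => by
    have hKg : (K *ᵥ g) x ≤ 1 := (hK.mulVec_mem_Icc hg).2 x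
    have hpig : 0 ≤ pi ⬝ᵥ g := hpi.le_dotProduct hg.1
    linarith

lemma maxDist_mul_le (hK : IsStochastic K) (hM : IsStochastic M) (hpi : IsProbVec pi)
    (hpiM : pi ᵥ* M = pi) :
    maxDist (K * M) pi ≤ maxDist K pi :=
  maxDist_le (hK.mul hM) hpi fun g hg x => by
    rw [← mulVec_mulVec, ← dotProduct_mulVec_of_vecMul_eq hpiM]
    exact (le_abs_self _).trans (abs_mulVec_sub_le_maxDist hK hpi (hM.mulVec_mem_Icc hg) x)

variable [DecidableEq Ω]

lemma maxDist_one_add_le (hK : IsStochastic K) (hpi : IsProbVec pi) {ρ : ℝ}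
    (hρ : ∀ x, ρ ≤ K x x) : maxDist 1 pi + ρ ≤ maxDist K pi + 1 := by
  rw [← le_sub_iff_add_le]
  refine maxDist_le isStochastic_one hpi fun g hg x => ?_
  have hg1 : g x ≤ 1 := hg.2 x
  have hstay : K x x * g x ≤ (K *ᵥ g) x :=
    Finset.single_le_sum (f := fun y => K x y * g y)
      (fun y _ => mul_nonneg (hK.1 x y) (hg.1 y)) (Finset.mem_univ x)
  have hKx : K x x ≤ 1 :=
    le_one_of_mem_rowStochastic (isStochastic_iff_mem_rowStochastic.1 hK)
  have hdist := (le_abs_self _).trans (abs_mulVec_sub_le_maxDist hK hpi hg x)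
  rw [one_mulVec]
  nlinarith [hρ x, mul_nonneg (sub_nonneg.2 hKx) (sub_nonneg.2 hg1)]

lemma antitone_maxDist_pow (hM : IsStochastic M) (hpi : IsProbVec pi) (hpiM : pi ᵥ* M = pi) :
    Antitone fun m => maxDist (M ^ m) pi := by
  refine antitone_nat_of_succ_le fun m => ?_
  rw [pow_succ]
  exact maxDist_mul_le (hM.pow m) hM hpi hpiM

lemma antitoneOn_maxDist_heatKernel (hM : IsStochastic M) (hpi : IsProbVec pi)
    (hpiM : pi ᵥ* M = pi) : AntitoneOn (fun t => maxDist (heatKernel M t) pi) (Set.Ici 0) := by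
  intro s hs t _ hst
  simp only
  rw [← add_sub_cancel s t, heatKernel_add]
  exact maxDist_mul_le (hM.heatKernel hs) (hM.heatKernel (sub_nonneg.2 hst)) hpi
    (vecMul_heatKernel_of_vecMul_eq hpiM _)

lemma deltaMass_vecMul (x : Ω) (M : Matrix Ω Ω ℝ) : deltaMass x ᵥ* M = M x := by
  ext y
  simp [vecMul, dotProduct, deltaMass]

lemma contDistMax_eq_maxDist (P : Matrix Ω Ω ℝ) (pi : Ω → ℝ) (t : ℝ) :
    contDistMax P pi t = maxDist (heatKernel P t) pi := by
  simp only [contDistMax, contDist, deltaMass_vecMul]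
  exact iSup_congr fun x => congrArg (tvDist · pi) <|
    funext fun y => (hasSum_heatKernel_apply P t x y).tsum_eq

lemma lazyDistMax_eq_maxDist (P : Matrix Ω Ω ℝ) (pi : Ω → ℝ) (t : ℝ) :
    lazyDistMax P pi t = maxDist (lazyM P ^ ⌊t⌋₊) pi := by
  simp only [lazyDistMax, lazyDist, maxDist, deltaMass_vecMul]

end TotalVariation

section PosContraction

variable {Ω : Type*} [Fintype Ω] {P Q : Matrix Ω Ω ℝ} {pi f : Ω → ℝ} {β : ℝ} {J : ℕ}

lemma IsReversible.dotProduct_mul_mulVec (hR : IsReversible P pi) (f g : Ω → ℝ) :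
    pi ⬝ᵥ (f * (P *ᵥ g)) = pi ⬝ᵥ ((P *ᵥ f) * g) := by
  simp only [dotProduct, mulVec, Pi.mul_apply, Finset.mul_sum, Finset.sum_mul]
  rw [Finset.sum_comm]
  refine Finset.sum_congr rfl fun y _ => Finset.sum_congr rfl fun x _ => ?_
  linear_combination f x * g y * hR x y

lemma IsStochastic.abs_dotProduct_mul_mulVec_le (hP : IsStochastic P) (hpi : ∀ x, 0 ≤ pi x)
    (hpiP : pi ᵥ* P = pi) (f : Ω → ℝ) : |pi ⬝ᵥ (f * (P *ᵥ f))| ≤ pi ⬝ᵥ (f * f) := by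
  have hamgm (a b : ℝ) : |a * b| ≤ (a * a + b * b) / 2 := by
    rw [abs_le]
    constructor <;> nlinarith [sq_nonneg (a + b), sq_nonneg (a - b)]
  have hfirst : ∑ x, ∑ y, pi x * P x y * (f x * f x) = pi ⬝ᵥ (f * f) :=
    Finset.sum_congr rfl fun x _ => by
      rw [← Finset.sum_mul, ← Finset.mul_sum, hP.2, mul_one, Pi.mul_apply]
  have hsecond : ∑ x, ∑ y, pi x * P x y * (f y * f y) = pi ⬝ᵥ (f * f) := by
    rw [Finset.sum_comm]
    exact Finset.sum_congr rfl fun y _ => by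
      rw [← Finset.sum_mul, Pi.mul_apply]
      exact congrArg (· * _) (congr_fun hpiP y)
  calc |pi ⬝ᵥ (f * (P *ᵥ f))| = |∑ x, ∑ y, pi x * P x y * (f x * f y)| := by
        simp only [dotProduct, mulVec, Pi.mul_apply, Finset.mul_sum]
        refine congrArg abs (Finset.sum_congr rfl fun x _ => Finset.sum_congr rfl fun y _ => ?_)
        ring
    _ ≤ ∑ x, ∑ y, |pi x * P x y * (f x * f y)| :=
        (Finset.abs_sum_le_sum_abs _ _).trans
          (Finset.sum_le_sum fun _ _ => Finset.abs_sum_le_sum_abs _ _)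
    _ ≤ ∑ x, ∑ y, pi x * P x y * ((f x * f x + f y * f y) / 2) := by
        gcongr with x _ y _
        have hw : 0 ≤ pi x * P x y := mul_nonneg (hpi x) (hP.1 x y)
        rw [abs_mul, abs_of_nonneg hw]
        exact mul_le_mul_of_nonneg_left (hamgm _ _) hw
    _ = (∑ x, ∑ y, pi x * P x y * (f x * f x) + ∑ x, ∑ y, pi x * P x y * (f y * f y)) / 2 := by
        simp only [← mul_div_assoc, mul_add, ← Finset.sum_div, Finset.sum_add_distrib]
    _ = pi ⬝ᵥ (f * f) := by rw [hfirst, hsecond, add_self_div_two]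

lemma IsProbVec.dotProduct_abs_le (hpi : IsProbVec pi) (hβ : 0 ≤ β)
    (hf : pi ⬝ᵥ (f * f) ≤ β ^ 2) : pi ⬝ᵥ |f| ≤ β := by
  refine le_of_sq_le_sq ?_ hβ
  calc (pi ⬝ᵥ |f|) ^ 2 ≤ ∑ x, pi x * |f| x ^ 2 :=
        Real.pow_arith_mean_le_arith_mean_pow _ _ _ (fun x _ => hpi.1 x) hpi.2
          (fun x _ => abs_nonneg _) 2
    _ = pi ⬝ᵥ (f * f) := Finset.sum_congr rfl fun x _ => by
        rw [Pi.abs_apply, sq_abs, Pi.mul_apply, sq]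
    _ ≤ β ^ 2 := hf

/-- `Q` is a self-adjoint operator with `0 ≤ Q ≤ 1` for the bilinear form `pi ⬝ᵥ (f * g)`. This is
all that the maximal inequality below needs to know about a lazy reversible chain. -/
structure IsPosContraction (Q : Matrix Ω Ω ℝ) (pi : Ω → ℝ) : Prop where
  isReversible : IsReversible Q pi
  nonneg (f : Ω → ℝ) : 0 ≤ pi ⬝ᵥ (f * (Q *ᵥ f))
  le (f : Ω → ℝ) : pi ⬝ᵥ (f * (Q *ᵥ f)) ≤ pi ⬝ᵥ (f * f)

lemma IsPosContraction.dotProduct_mul_self_nonneg (h : IsPosContraction Q pi) (f : Ω → ℝ) :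
    0 ≤ pi ⬝ᵥ (f * f) :=
  (h.nonneg f).trans (h.le f)

variable [DecidableEq Ω]

lemma isPosContraction_lazyM (hR : IsReversible P pi) (hP : IsStochastic P)
    (hpi : ∀ x, 0 ≤ pi x) : IsPosContraction (lazyM P) pi := by
  have havg (f : Ω → ℝ) : pi ⬝ᵥ (f * (lazyM P *ᵥ f)) =
      (2 : ℝ)⁻¹ * (pi ⬝ᵥ (f * f) + pi ⬝ᵥ (f * (P *ᵥ f))) := by
    rw [lazyM_mulVec, mul_smul_comm, mul_add, dotProduct_smul, dotProduct_add, smul_eq_mul]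
  have habs (f : Ω → ℝ) := abs_le.1 (hP.abs_dotProduct_mul_mulVec_le hpi (hR.vecMul_eq hP) f)
  refine ⟨hR.lazyM, fun f => ?_, fun f => ?_⟩ <;> rw [havg f] <;> linarith [habs f]

/-- The lag-`n` autocovariance `⟨f, Qⁿ f⟩` of `f` along the chain with transition matrix `Q` started
from `pi`, when `f` has mean zero. -/
noncomputable def autocov (Q : Matrix Ω Ω ℝ) (pi f : Ω → ℝ) (n : ℕ) : ℝ :=
  pi ⬝ᵥ (f * (Q ^ n *ᵥ f))

lemma mulVec_pow_mulVec (Q : Matrix Ω Ω ℝ) (f : Ω → ℝ) (n : ℕ) :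
    Q *ᵥ (Q ^ n *ᵥ f) = Q ^ (n + 1) *ᵥ f := by
  rw [mulVec_mulVec, ← pow_succ']

lemma pow_mulVec_mulVec (Q : Matrix Ω Ω ℝ) (f : Ω → ℝ) (n : ℕ) :
    Q ^ n *ᵥ (Q *ᵥ f) = Q ^ (n + 1) *ᵥ f := by
  rw [mulVec_mulVec, ← pow_succ]

namespace IsPosContraction

lemma dotProduct_pow_mul_pow (h : IsPosContraction Q pi) (f : Ω → ℝ) (i j : ℕ) :
    pi ⬝ᵥ ((Q ^ i *ᵥ f) * (Q ^ j *ᵥ f)) = autocov Q pi f (i + j) := by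
  induction i generalizing j with
  | zero => rw [pow_zero, one_mulVec, zero_add, autocov]
  | succ i ih =>
    rw [← mulVec_pow_mulVec, ← h.isReversible.dotProduct_mul_mulVec, mulVec_pow_mulVec, ih,
      Nat.add_right_comm, add_assoc]

lemma autocov_nonneg (h : IsPosContraction Q pi) (f : Ω → ℝ) (n : ℕ) : 0 ≤ autocov Q pi f n := by
  obtain ⟨k, rfl | rfl⟩ := n.even_or_odd'
  · rw [two_mul, ← h.dotProduct_pow_mul_pow]
    exact h.dotProduct_mul_self_nonneg _
  · rw [two_mul, add_assoc, ← h.dotProduct_pow_mul_pow, ← mulVec_pow_mulVec]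
    exact h.nonneg _

lemma autocov_sub_mulVec (h : IsPosContraction Q pi) (f : Ω → ℝ) (n : ℕ) :
    autocov Q pi (f - Q *ᵥ f) n =
      autocov Q pi f n - autocov Q pi f (n + 1) -
        (autocov Q pi f (n + 1) - autocov Q pi f (n + 1 + 1)) := by
  have h10 := h.dotProduct_pow_mul_pow f 1 n
  have h11 := h.dotProduct_pow_mul_pow f 1 (n + 1)
  rw [pow_one, add_comm 1] at h10 h11
  rw [autocov, mulVec_sub, pow_mulVec_mulVec, mul_sub, sub_mul, sub_mul]
  simp only [dotProduct_sub]
  rw [h10, h11]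
  rfl

lemma antitone_autocov (h : IsPosContraction Q pi) (f : Ω → ℝ) : Antitone (autocov Q pi f) := by
  have heven (k : ℕ) : autocov Q pi f (k + k + 1) ≤ autocov Q pi f (k + k) := by
    rw [add_assoc, ← h.dotProduct_pow_mul_pow, ← h.dotProduct_pow_mul_pow, ← mulVec_pow_mulVec]
    exact h.le _
  refine antitone_nat_of_succ_le fun n => ?_
  obtain ⟨k, rfl | rfl⟩ := n.even_or_odd'
  · rw [two_mul]
    exact heven k
  · -- `Q - Q² = (1 - Q) Q (1 - Q) + Q (1 - Q) Q`
    have hdiff := h.autocov_nonneg (f - Q *ᵥ f) (2 * k + 1)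
    rw [h.autocov_sub_mulVec] at hdiff
    have hnext := heven (k + 1)
    rw [show k + 1 + (k + 1) = 2 * k + 1 + 1 by ring] at hnext
    linarith

lemma antitone_autocov_sub_succ (h : IsPosContraction Q pi) (f : Ω → ℝ) :
    Antitone fun n => autocov Q pi f n - autocov Q pi f (n + 1) := by
  refine antitone_nat_of_succ_le fun n => ?_
  have := h.autocov_nonneg (f - Q *ᵥ f) n
  rwa [h.autocov_sub_mulVec, sub_nonneg] at this

lemma autocov_sq_le (h : IsPosContraction Q pi) (f : Ω → ℝ) (n : ℕ) :
    autocov Q pi f n ^ 2 ≤ autocov Q pi f 0 * autocov Q pi f (2 * n) := by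
  have hquad (s : ℝ) : 0 ≤ autocov Q pi f (2 * n) * (s * s) + -2 * autocov Q pi f n * s +
      autocov Q pi f 0 := by
    have hpos := h.dotProduct_mul_self_nonneg (f - s • (Q ^ n *ᵥ f))
    have hexpand : (f - s • (Q ^ n *ᵥ f)) * (f - s • (Q ^ n *ᵥ f)) =
        f * f - (2 * s) • (f * (Q ^ n *ᵥ f)) + (s * s) • ((Q ^ n *ᵥ f) * (Q ^ n *ᵥ f)) := by
      simp only [Pi.smul_def, smul_eq_mul]
      funext x
      simp only [Pi.mul_apply, Pi.sub_apply, Pi.add_apply]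
      ring
    rw [hexpand, dotProduct_add, dotProduct_sub, dotProduct_smul, dotProduct_smul,
      h.dotProduct_pow_mul_pow, ← two_mul] at hpos
    simp only [smul_eq_mul] at hpos
    have hzero : autocov Q pi f 0 = pi ⬝ᵥ (f * f) := by rw [autocov, pow_zero, one_mulVec]
    rw [hzero]
    change 0 ≤ _ - 2 * s * autocov Q pi f n + _ at hpos
    linarith
  have := discrim_le_zero hquad
  rw [discrim] at this
  linarith

lemma autocov_pow_two_pow_le (h : IsPosContraction Q pi) (hf : autocov Q pi f 0 ≤ 1) (J r : ℕ) :
    autocov Q pi f J ^ 2 ^ r ≤ autocov Q pi f (2 ^ r * J) := by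
  induction r with
  | zero => simp
  | succ r ih =>
    calc autocov Q pi f J ^ 2 ^ (r + 1) = (autocov Q pi f J ^ 2 ^ r) ^ 2 := by
          rw [← pow_mul, ← pow_succ]
      _ ≤ autocov Q pi f (2 ^ r * J) ^ 2 :=
          pow_le_pow_left₀ (pow_nonneg (h.autocov_nonneg f J) _) ih 2
      _ ≤ 1 * autocov Q pi f (2 * (2 ^ r * J)) :=
          (h.autocov_sq_le f _).trans
            (mul_le_mul_of_nonneg_right hf (h.autocov_nonneg f _))
      _ = autocov Q pi f (2 ^ (r + 1) * J) := by rw [one_mul, ← mul_assoc, ← pow_succ']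

end IsPosContraction

lemma natCast_mul_sub_succ_le {a : ℕ → ℝ} (ha : ∀ n, 0 ≤ a n)
    (hanti : Antitone fun n => a n - a (n + 1)) (m k : ℕ) :
    k * (a (m + k) - a (m + k + 1)) ≤ a m := by
  calc k * (a (m + k) - a (m + k + 1)) ≤ ∑ i ∈ Finset.range k, (a (m + i) - a (m + i + 1)) := by
        have := Finset.card_nsmul_le_sum (Finset.range k) (fun i => a (m + i) - a (m + i + 1))
          (a (m + k) - a (m + k + 1)) fun i hi =>
            hanti (Nat.add_le_add_left (Finset.mem_range.1 hi).le m)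
        rwa [Finset.card_range, nsmul_eq_mul] at this
    _ = a m - a (m + k) := Finset.sum_range_sub' (fun i => a (m + i)) k
    _ ≤ a m := sub_le_self _ (ha _)

namespace IsPosContraction

lemma sq_mul_autocov_sub_mulVec_le (h : IsPosContraction Q pi) (f : Ω → ℝ) (J : ℕ) :
    (J : ℝ) ^ 2 * autocov Q pi (f - Q *ᵥ f) (J + J + J) ≤ autocov Q pi f J := by
  have hanti := h.antitone_autocov_sub_succ
  have hfirst := natCast_mul_sub_succ_le (h.autocov_nonneg f) (hanti f) J J
  have hsecond : J * autocov Q pi (f - Q *ᵥ f) (J + J + J) ≤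
      autocov Q pi f (J + J) - autocov Q pi f (J + J + 1) := by
    rw [h.autocov_sub_mulVec]
    refine natCast_mul_sub_succ_le (a := fun n => autocov Q pi f n - autocov Q pi f (n + 1))
      (fun n => sub_nonneg.2 (h.antitone_autocov f n.le_succ)) ?_ (J + J) J
    exact funext (h.autocov_sub_mulVec f) ▸ h.antitone_autocov (f - Q *ᵥ f)
  calc (J : ℝ) ^ 2 * autocov Q pi (f - Q *ᵥ f) (J + J + J)
      = J * (J * autocov Q pi (f - Q *ᵥ f) (J + J + J)) := by ring
    _ ≤ J * (autocov Q pi f (J + J) - autocov Q pi f (J + J + 1)) := by gcongr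
    _ ≤ autocov Q pi f J := hfirst

lemma dotProduct_abs_pow_mulVec_le (h : IsPosContraction Q pi) (hpi : IsProbVec pi) (hβ : 0 ≤ β)
    (hf : autocov Q pi f J ≤ β ^ 2) {j : ℕ} (hj : J ≤ 2 * j) : pi ⬝ᵥ |Q ^ j *ᵥ f| ≤ β := by
  refine hpi.dotProduct_abs_le hβ ?_
  rw [h.dotProduct_pow_mul_pow, ← two_mul]
  exact (h.antitone_autocov f hj).trans hf

lemma dotProduct_abs_pow_mulVec_sub_succ_le (h : IsPosContraction Q pi) (hpi : IsProbVec pi)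
    (hJ : 0 < J) (hβ : 0 ≤ β) (hf : autocov Q pi f J ≤ β ^ 2) {j : ℕ} (hj : 2 * J ≤ j) :
    pi ⬝ᵥ |Q ^ j *ᵥ f - Q ^ (j + 1) *ᵥ f| ≤ β / J := by
  rw [← pow_mulVec_mulVec, ← mulVec_sub]
  refine h.dotProduct_abs_pow_mulVec_le hpi (J := J + J + J) (by positivity) ?_ (by lia)
  rw [div_pow, le_div_iff₀' (by positivity)]
  exact (h.sq_mul_autocov_sub_mulVec_le f J).trans hf

/-- The maximal inequality. After `2 * J` steps the increments of the trajectory are so small that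
they can be summed in absolute value. -/
lemma exists_dominating_pow_mulVec (h : IsPosContraction Q pi) (hpi : IsProbVec pi)
    (hJ : 0 < J) (hβ : 0 ≤ β) (hf : autocov Q pi f J ≤ β ^ 2) (k : ℕ) :
    ∃ S : Ω → ℝ, pi ⬝ᵥ S ≤ β * (1 + k / J) ∧
      ∀ i ≤ k, ∀ x, |(Q ^ (2 * J + i) *ᵥ f) x| ≤ S x := by
  let increment (i : ℕ) : Ω → ℝ := Q ^ (2 * J + i) *ᵥ f - Q ^ (2 * J + i + 1) *ᵥ f
  refine ⟨|Q ^ (2 * J) *ᵥ f| + ∑ i ∈ Finset.range k, |increment i|, ?_, fun i hi x => ?_⟩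
  · calc pi ⬝ᵥ (|Q ^ (2 * J) *ᵥ f| + ∑ i ∈ Finset.range k, |increment i|)
        = pi ⬝ᵥ |Q ^ (2 * J) *ᵥ f| + ∑ i ∈ Finset.range k, pi ⬝ᵥ |increment i| := by
          rw [dotProduct_add, dotProduct_sum]
      _ ≤ β + ∑ _i ∈ Finset.range k, β / J :=
          add_le_add (h.dotProduct_abs_pow_mulVec_le hpi hβ hf (by lia)) <|
            Finset.sum_le_sum fun i _ =>
              h.dotProduct_abs_pow_mulVec_sub_succ_le hpi hJ hβ hf (Nat.le_add_right _ _)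
      _ = β * (1 + k / J) := by
          rw [Finset.sum_const, Finset.card_range, nsmul_eq_mul]
          ring
  · have htele : ∑ j ∈ Finset.range i, increment j x =
        (Q ^ (2 * J) *ᵥ f) x - (Q ^ (2 * J + i) *ᵥ f) x :=
      Finset.sum_range_sub' (fun j => (Q ^ (2 * J + j) *ᵥ f) x) i
    calc |(Q ^ (2 * J + i) *ᵥ f) x|
        ≤ |(Q ^ (2 * J) *ᵥ f) x| + ∑ j ∈ Finset.range i, |increment j x| := by
          rw [← sub_sub_cancel ((Q ^ (2 * J) *ᵥ f) x) ((Q ^ (2 * J + i) *ᵥ f) x), ← htele]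
          exact (abs_sub _ _).trans (add_le_add_right (Finset.abs_sum_le_sum_abs _ _) _)
      _ ≤ |(Q ^ (2 * J) *ᵥ f) x| + ∑ j ∈ Finset.range k, |increment j x| := by
          gcongr
      _ = (|Q ^ (2 * J) *ᵥ f| + ∑ j ∈ Finset.range k, |increment j|) x := by
          simp only [Pi.add_apply, Finset.sum_apply, Pi.abs_apply]

end IsPosContraction

end PosContraction

section Comparison

variable {Ω : Type*} [Fintype Ω] {K Q : Matrix Ω Ω ℝ} {pi g : Ω → ℝ} {β l : ℝ} {i J k n : ℕ}

/-- The fluctuation `g - ∫ g dπ` of an observable about its stationary mean. -/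
noncomputable def centered (pi g : Ω → ℝ) : Ω → ℝ :=
  fun x => g x - pi ⬝ᵥ g

lemma IsStochastic.mulVec_centered (hK : IsStochastic K) (pi g : Ω → ℝ) (x : Ω) :
    (K *ᵥ centered pi g) x = (K *ᵥ g) x - pi ⬝ᵥ g :=
  congr_fun (hK.mulVec_sub_const g _) x

lemma abs_centered_le_one (hpi : IsProbVec pi) (hg : g ∈ Set.Icc 0 1) (x : Ω) :
    |centered pi g x| ≤ 1 := by
  have h0 : 0 ≤ g x := hg.1 x
  have h1 : g x ≤ 1 := hg.2 x
  have hmean0 : 0 ≤ pi ⬝ᵥ g := hpi.le_dotProduct hg.1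
  have hmean1 : pi ⬝ᵥ g ≤ 1 := hpi.dotProduct_le hg.2
  rw [centered, abs_le]
  constructor <;> linarith

lemma dotProduct_centered_mul_mulVec_le_maxDist (hK : IsStochastic K) (hpi : IsProbVec pi)
    (hg : g ∈ Set.Icc 0 1) :
    pi ⬝ᵥ (centered pi g * (K *ᵥ centered pi g)) ≤ maxDist K pi := by
  refine hpi.dotProduct_le fun x => (le_abs_self _).trans ?_
  calc |centered pi g x * (K *ᵥ centered pi g) x|
      = |centered pi g x| * |(K *ᵥ g) x - pi ⬝ᵥ g| := by rw [abs_mul, hK.mulVec_centered]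
    _ ≤ 1 * maxDist K pi :=
        mul_le_mul (abs_centered_le_one hpi hg x) (abs_mulVec_sub_le_maxDist hK hpi hg x)
          (abs_nonneg _) zero_le_one
    _ = maxDist K pi := one_mul _

lemma one_le_sub_sq_div_sub_sq {m k l : ℝ} (h : m ≤ k ∧ k < l ∨ l < k ∧ k ≤ m) :
    1 ≤ (m - l) ^ 2 / (k - l) ^ 2 := by
  have hk : 0 < (k - l) ^ 2 := by
    rw [sq_pos_iff, sub_ne_zero]
    rcases h with h | h
    exacts [h.2.ne, h.1.ne']
  rw [one_le_div hk]
  rcases h with h | h <;> nlinarith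

variable [DecidableEq Ω]

lemma autocov_centered_le_one (hQ : IsStochastic Q) (hpi : IsProbVec pi)
    (hg : g ∈ Set.Icc 0 1) (m : ℕ) : autocov Q pi (centered pi g) m ≤ 1 :=
  (dotProduct_centered_mul_mulVec_le_maxDist (hQ.pow m) hpi hg).trans
    (maxDist_le_one (hQ.pow m) hpi)

lemma hasSum_poissonWeight_mul_autocov (Q : Matrix Ω Ω ℝ) (pi f : Ω → ℝ) (t : ℝ) :
    HasSum (fun m => poissonWeight t m * autocov Q pi f m)
      (pi ⬝ᵥ (f * (heatKernel Q t *ᵥ f))) := by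
  refine (hasSum_sum fun x _ =>
    ((hasSum_heatKernel_mulVec Q t f x).mul_left (f x)).mul_left (pi x)).congr_fun fun m => ?_
  simp only [autocov, dotProduct, Pi.mul_apply, Finset.mul_sum]
  exact Finset.sum_congr rfl fun x _ => by ring

lemma maxDist_heatKernel_le (hQ : IsStochastic Q) (hpi : IsProbVec pi) (hpiQ : pi ᵥ* Q = pi)
    (hkl : k < l) :
    maxDist (heatKernel Q l) pi ≤ maxDist (Q ^ k) pi + l / (k - l) ^ 2 := by
  have hl : 0 ≤ l := (Nat.cast_nonneg k).trans hkl.le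
  refine maxDist_le (hQ.heatKernel hl) hpi fun g hg x => ?_
  have hsum : HasSum (fun m => poissonWeight l m * -(Q ^ m *ᵥ g) x) (-(heatKernel Q l *ᵥ g) x) :=
    (hasSum_heatKernel_mulVec Q l g x).neg.congr_fun fun m => mul_neg _ _
  suffices -(pi ⬝ᵥ g + maxDist (Q ^ k) pi) ≤ -(heatKernel Q l *ᵥ g) x + l / (k - l) ^ 2 by
    linarith
  refine le_add_div_sq_of_hasSum_poissonWeight hl hsum fun m => ?_
  obtain hmk | hkm := lt_or_ge m k
  · have hdev : 1 ≤ ((m : ℝ) - l) ^ 2 / (k - l) ^ 2 :=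
      one_le_sub_sq_div_sub_sq (.inl ⟨mod_cast hmk.le, hkl⟩)
    have hg1 : (Q ^ m *ᵥ g) x ≤ 1 := ((hQ.pow m).mulVec_mem_Icc hg).2 x
    have hmean : 0 ≤ pi ⬝ᵥ g := hpi.le_dotProduct hg.1
    linarith [maxDist_nonneg (Q ^ k) pi]
  · have hdist := (le_abs_self _).trans (abs_mulVec_sub_le_maxDist (hQ.pow m) hpi hg x)
    have hanti : maxDist (Q ^ m) pi ≤ maxDist (Q ^ k) pi := antitone_maxDist_pow hQ hpi hpiQ hkm
    have : 0 ≤ ((m : ℝ) - l) ^ 2 / (k - l) ^ 2 := by positivity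
    linarith

namespace IsPosContraction

lemma autocov_centered_le (h : IsPosContraction Q pi) (hQ : IsStochastic Q) (hpi : IsProbVec pi)
    (hg : g ∈ Set.Icc 0 1) (hl : 0 ≤ l) (hln : l < n) :
    autocov Q pi (centered pi g) n ≤ maxDist (heatKernel Q l) pi + l / (n - l) ^ 2 := by
  refine (le_add_div_sq_of_hasSum_poissonWeight hl
    (hasSum_poissonWeight_mul_autocov Q pi (centered pi g) l) fun m => ?_).trans <|
    add_le_add_left (dotProduct_centered_mul_mulVec_le_maxDist (hQ.heatKernel hl) hpi hg) _
  obtain hmn | hnm := le_total m n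
  · have : 0 ≤ ((m : ℝ) - l) ^ 2 / (n - l) ^ 2 := by positivity
    linarith [h.antitone_autocov (centered pi g) hmn]
  · have hdev : 1 ≤ ((m : ℝ) - l) ^ 2 / (n - l) ^ 2 :=
      one_le_sub_sq_div_sub_sq (.inr ⟨hln, mod_cast hnm⟩)
    linarith [h.autocov_nonneg (centered pi g) m, autocov_centered_le_one hQ hpi hg n]

/-- Below the threshold `i`, the last `2 * J + (i - m)` of the `2 * J + i` steps are absorbed in
the dominating function, so that any number `m` of remaining steps gives the same bound. -/
lemma maxDist_pow_le (h : IsPosContraction Q pi) (hQ : IsStochastic Q) (hpi : IsProbVec pi)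
    (hJ : 0 < J) (hβ : 0 ≤ β)
    (hcov : ∀ g ∈ Set.Icc (0 : Ω → ℝ) 1, autocov Q pi (centered pi g) J ≤ β ^ 2)
    (hl : 0 ≤ l) (hli : l < i) :
    maxDist (Q ^ (2 * J + i)) pi ≤
      maxDist (heatKernel Q l) pi + l / (i - l) ^ 2 + β * (1 + i / J) := by
  refine maxDist_le (hQ.pow _) hpi fun g hg x => ?_
  obtain ⟨S, hSmean, hS⟩ := h.exists_dominating_pow_mulVec hpi hJ hβ (hcov g hg) i
  let S' : Ω → ℝ := S ⊓ 1
  have hS' : S' ∈ Set.Icc 0 1 :=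
    ⟨le_inf (fun y => (abs_nonneg _).trans (hS 0 i.zero_le y)) zero_le_one, inf_le_right⟩
  have hS'mean : pi ⬝ᵥ S' ≤ pi ⬝ᵥ S :=
    Finset.sum_le_sum fun y _ => mul_le_mul_of_nonneg_left ((inf_le_left : S' ≤ S) y) (hpi.1 y)
  have hdom {j : ℕ} (hj : j ≤ i) : Q ^ (2 * J + j) *ᵥ centered pi g ≤ S' := fun y =>
    le_inf ((le_abs_self _).trans (hS j hj y)) <| by
      rw [(hQ.pow _).mulVec_centered]
      exact (le_abs_self _).trans <|
        (abs_mulVec_sub_le_maxDist (hQ.pow _) hpi hg y).trans (maxDist_le_one (hQ.pow _) hpi)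
  have hS'heat := (le_abs_self _).trans (abs_mulVec_sub_le_maxDist (hQ.heatKernel hl) hpi hS' x)
  rw [← (hQ.pow _).mulVec_centered]
  suffices (Q ^ (2 * J + i) *ᵥ centered pi g) x ≤
    (heatKernel Q l *ᵥ S') x + l / (i - l) ^ 2 by linarith
  refine le_add_div_sq_of_hasSum_poissonWeight hl (hasSum_heatKernel_mulVec Q l S' x) fun m => ?_
  obtain hmi | him := le_total m i
  · have hsplit : Q ^ (2 * J + i) = Q ^ m * Q ^ (2 * J + (i - m)) := by
      rw [← pow_add]
      congr 1
      lia
    have hdev : 0 ≤ ((m : ℝ) - l) ^ 2 / (i - l) ^ 2 := by positivity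
    rw [hsplit, ← mulVec_mulVec]
    exact le_add_of_le_of_nonneg (Finset.sum_le_sum fun y _ =>
      mul_le_mul_of_nonneg_left (hdom (i.sub_le m) y) ((hQ.pow m).1 x y)) hdev
  · have hdev : 1 ≤ ((m : ℝ) - l) ^ 2 / (i - l) ^ 2 :=
      one_le_sub_sq_div_sub_sq (.inr ⟨hli, mod_cast him⟩)
    have hS'1 : S' x ≤ 1 := hS'.2 x
    have hpow : 0 ≤ (Q ^ m *ᵥ S') x := ((hQ.pow m).mulVec_mem_Icc hS').1 x
    linarith [hdom le_rfl x]

end IsPosContraction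

end Comparison

section MixingTime

variable {d : ℝ → ℝ} {ε s t : ℝ}

/-- The first time at which a distance to equilibrium `d` reaches level `ε`, or the junk value `0`
if it never does. -/
noncomputable def mixTime (d : ℝ → ℝ) (ε : ℝ) : ℝ :=
  sInf {t : ℝ | 0 ≤ t ∧ d t ≤ ε}

lemma mixTime_nonneg (d : ℝ → ℝ) (ε : ℝ) : 0 ≤ mixTime d ε :=
  Real.sInf_nonneg fun _ ht => ht.1

lemma mixTime_le (ht : 0 ≤ t) (h : d t ≤ ε) : mixTime d ε ≤ t :=
  csInf_le ⟨0, fun _ hs => hs.1⟩ ⟨ht, h⟩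

lemma lt_of_lt_mixTime (ht : 0 ≤ t) (h : t < mixTime d ε) : ε < d t :=
  lt_of_not_ge fun hle => h.not_ge (mixTime_le ht hle)

lemma le_of_mixTime_lt (hd : AntitoneOn d (Set.Ici 0)) (hpos : 0 < mixTime d ε)
    (h : mixTime d ε < t) : d t ≤ ε := by
  have hne : {t : ℝ | 0 ≤ t ∧ d t ≤ ε}.Nonempty := by
    refine Set.nonempty_iff_ne_empty.2 fun hempty => hpos.ne' ?_
    rw [mixTime, hempty, Real.sInf_empty]
  obtain ⟨s, hs, hst⟩ := exists_lt_of_csInf_lt hne h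
  exact (hd hs.1 (hs.1.trans hst.le) hst.le).trans hs.2

lemma le_mixTime (hd : AntitoneOn d (Set.Ici 0)) (ht : 0 ≤ t) (h : ε < d t) (hs : 0 ≤ s)
    (hsε : d s ≤ ε) : t ≤ mixTime d ε :=
  le_csInf ⟨s, hs, hsε⟩ fun _ hr =>
    le_of_not_ge fun hrt => (hr.2.trans_lt h).not_ge (hd hr.1 ht hrt)

lemma mixTime_anti (hd : AntitoneOn d (Set.Ici 0)) {ε' : ℝ} (hpos : 0 < mixTime d ε)
    (h : ε ≤ ε') : mixTime d ε' ≤ mixTime d ε :=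
  le_of_forall_gt_imp_ge_of_dense fun _ ht =>
    mixTime_le (hpos.trans ht).le ((le_of_mixTime_lt hd hpos ht).trans h)

lemma natCast_sInf_eq_mixTime (D : ℕ → ℝ) (ε : ℝ) :
    ((sInf {n : ℕ | D n ≤ ε} : ℕ) : ℝ) = mixTime (fun t => D ⌊t⌋₊) ε := by
  obtain hempty | hne := {n : ℕ | D n ≤ ε}.eq_empty_or_nonempty
  · have hempty' : {t : ℝ | 0 ≤ t ∧ D ⌊t⌋₊ ≤ ε} = ∅ :=
      Set.eq_empty_of_forall_notMem fun t ht => (hempty ▸ ht.2 : ⌊t⌋₊ ∈ (∅ : Set ℕ))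
    rw [mixTime, hempty, hempty', Nat.sInf_empty, Real.sInf_empty, Nat.cast_zero]
  · have hmem : D (sInf {n : ℕ | D n ≤ ε}) ≤ ε := Nat.sInf_mem hne
    rw [← Nat.floor_natCast (R := ℝ) (sInf _)] at hmem
    exact le_antisymm (le_csInf ⟨_, Nat.cast_nonneg _, hmem⟩ fun t ht =>
        (Nat.cast_le.2 (Nat.sInf_le ht.2)).trans (Nat.floor_le ht.1))
      (mixTime_le (Nat.cast_nonneg _) hmem)

end MixingTime

section Cutoff

variable {ι : Type*} {L : Filter ι} {d : ι → ℝ → ℝ} {τ : ι → ℝ}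

/-- Cutoff along a family of distances to equilibrium, in terms of ratios of mixing times. -/
def IsCutoff (d : ι → ℝ → ℝ) (L : Filter ι) : Prop :=
  ∀ ε : ℝ, 0 < ε → ε < 1 →
    Tendsto (fun n => mixTime (d n) ε / mixTime (d n) (1 - ε)) L (nhds 1)

/-- The distances `d n` drop abruptly from one to zero at the times `τ n`: cutoff in terms of the
distances themselves, without reference to mixing times. -/
structure CutoffAt (d : ι → ℝ → ℝ) (τ : ι → ℝ) (L : Filter ι) : Prop where
  eventually_le {c : ℝ} (hc : 1 < c) {ε : ℝ} (hε : 0 < ε) : ∀ᶠ n in L, d n (c * τ n) ≤ ε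
  eventually_ge {c : ℝ} (hc0 : 0 < c) (hc1 : c < 1) {ε : ℝ} (hε : 0 < ε) :
    ∀ᶠ n in L, 1 - ε ≤ d n (c * τ n)

lemma IsCutoff.eventually_mixTime (h : IsCutoff d L) {ε c : ℝ} (hε0 : 0 < ε) (hε1 : ε < 1)
    (hc : 1 < c) :
    ∀ᶠ n in L, 0 < mixTime (d n) ε ∧ mixTime (d n) ε < c * mixTime (d n) (1 - ε) := by
  filter_upwards [(h ε hε0 hε1).eventually_lt_const hc,
    (h ε hε0 hε1).eventually_const_lt zero_lt_one] with n hlt hpos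
  have hε := mixTime_nonneg (d n) ε
  have hnum : 0 < mixTime (d n) ε := hε.lt_of_ne' fun h0 => by simp [h0] at hpos
  have hden : 0 < mixTime (d n) (1 - ε) := (div_pos_iff_of_pos_left hnum).1 hpos
  exact ⟨hnum, (div_lt_iff₀ hden).1 hlt⟩

lemma IsCutoff.cutoffAt (h : IsCutoff d L) (hd : ∀ n, AntitoneOn (d n) (Set.Ici 0)) :
    CutoffAt d (fun n => mixTime (d n) (1 / 2)) L := by
  refine ⟨fun {c} hc {ε} hε => ?_, fun {c} hc0 hc1 {ε} hε => ?_⟩ <;>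
    obtain ⟨δ, hδ0, hδ⟩ := exists_between (lt_min hε one_half_pos) <;>
    obtain ⟨hδε, hδhalf⟩ := lt_min_iff.1 hδ
  · filter_upwards [h.eventually_mixTime hδ0 (by linarith) hc,
      h.eventually_mixTime one_half_pos (by norm_num) hc] with n ⟨hpos, hlt⟩ ⟨hτ, _⟩
    have hmid : mixTime (d n) (1 - δ) ≤ mixTime (d n) (1 / 2) :=
      mixTime_anti (hd n) hτ (by linarith)
    refine (le_of_mixTime_lt (hd n) hpos (hlt.trans_le ?_)).trans hδε.le
    gcongr
  · filter_upwards [h.eventually_mixTime hδ0 (by linarith) ((one_lt_inv₀ hc0).2 hc1)]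
      with n ⟨hpos, hlt⟩
    have hmid : mixTime (d n) (1 / 2) ≤ mixTime (d n) δ := mixTime_anti (hd n) hpos hδhalf.le
    have hbefore : c * mixTime (d n) (1 / 2) < mixTime (d n) (1 - δ) :=
      (mul_le_mul_of_nonneg_left hmid hc0.le).trans_lt ((lt_inv_mul_iff₀ hc0).1 hlt)
    linarith [lt_of_lt_mixTime (mul_nonneg hc0.le (mixTime_nonneg _ _)) hbefore]

lemma CutoffAt.tendsto_mixTime_div (h : CutoffAt d τ L) (hd : ∀ n, AntitoneOn (d n) (Set.Ici 0))
    (hτ : ∀ᶠ n in L, 0 < τ n) {ε : ℝ} (hε0 : 0 < ε) (hε1 : ε < 1) :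
    Tendsto (fun n => mixTime (d n) ε / τ n) L (nhds 1) := by
  refine tendsto_order.2 ⟨fun a ha => ?_, fun a ha => ?_⟩
  · obtain ⟨c, hc, hc1⟩ := exists_between (max_lt ha zero_lt_one)
    obtain ⟨hac, hc0⟩ := max_lt_iff.1 hc
    filter_upwards [hτ, h.eventually_le one_lt_two hε0,
      h.eventually_ge hc0 hc1 (half_pos (sub_pos.2 hε1))] with n hτn hle hge
    have hlower : c * τ n ≤ mixTime (d n) ε :=
      le_mixTime (hd n) (by positivity) (by linarith) (by positivity) hle
    exact hac.trans_le ((le_div_iff₀ hτn).2 hlower)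
  · obtain ⟨c, hc1, hca⟩ := exists_between ha
    filter_upwards [hτ, h.eventually_le hc1 hε0] with n hτn hle
    have hupper : mixTime (d n) ε ≤ c * τ n :=
      mixTime_le (mul_nonneg (zero_le_one.trans hc1.le) hτn.le) hle
    exact ((div_le_iff₀ hτn).2 hupper).trans_lt hca

lemma CutoffAt.isCutoff (h : CutoffAt d τ L) (hd : ∀ n, AntitoneOn (d n) (Set.Ici 0))
    (hτ : ∀ᶠ n in L, 0 < τ n) : IsCutoff d L := by
  intro ε hε0 hε1
  have hratio := (h.tendsto_mixTime_div hd hτ hε0 hε1).div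
    (h.tendsto_mixTime_div hd hτ (sub_pos.2 hε1) (sub_lt_self 1 hε0)) one_ne_zero
  rw [div_one] at hratio
  exact hratio.congr' (hτ.mono fun n hτn => div_div_div_cancel_right₀ hτn.ne' _ _)

lemma CutoffAt.tendsto_atTop (h : CutoffAt d τ L) (hd : ∀ n, AntitoneOn (d n) (Set.Ici 0))
    (hτ : ∀ n, 0 ≤ τ n) {ρ : ℝ → ℝ} (hρ : ∀ t, 0 < ρ t)
    (hhold : ∀ n t, 0 ≤ t → d n 0 + ρ t ≤ d n t + 1) : Tendsto τ L atTop := by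
  refine Filter.tendsto_atTop.2 fun t => ?_
  let s := 2 * max t 0
  have hs : 0 ≤ s := mul_nonneg zero_le_two (le_max_right _ _)
  filter_upwards [h.eventually_le one_lt_two (div_pos (hρ s) three_pos),
    h.eventually_ge one_half_pos one_half_lt_one (div_pos (hρ s) three_pos)] with n hafter hbefore
  by_contra! hlt
  have hearly : 0 ≤ 1 / 2 * τ n := mul_nonneg one_half_pos.le (hτ n)
  have hτs : 2 * τ n ≤ s := mul_le_mul_of_nonneg_left (hlt.le.trans (le_max_left _ _)) zero_le_two
  have hstart : d n (1 / 2 * τ n) ≤ d n 0 := hd n Set.self_mem_Ici hearly hearly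
  have hlate : d n s ≤ d n (2 * τ n) := hd n (mul_nonneg zero_le_two (hτ n)) hs hτs
  linarith [hhold n s hs, hρ s]

/-- The holding hypothesis says that the chains stay put up to time `t` with probability at least
`ρ t`; this forbids a drop of the distance from near one to near zero in bounded time. -/
theorem isCutoff_iff_exists_cutoffAt (hd : ∀ n, AntitoneOn (d n) (Set.Ici 0)) {ρ : ℝ → ℝ}
    (hρ : ∀ t, 0 < ρ t) (hhold : ∀ n t, 0 ≤ t → d n 0 + ρ t ≤ d n t + 1) :
    IsCutoff d L ↔ ∃ τ, Tendsto τ L atTop ∧ CutoffAt d τ L :=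
  ⟨fun h => ⟨_, (h.cutoffAt hd).tendsto_atTop hd (fun _ => mixTime_nonneg _ _) hρ hhold,
    h.cutoffAt hd⟩, fun ⟨_, hτ, h⟩ => h.isCutoff hd (hτ.eventually_gt_atTop 0)⟩

end Cutoff

section Asymptotics

variable {ι : Type*} {L : Filter ι} {τ : ι → ℝ}

lemma eventually_mul_div_sq_le (hτ : Tendsto τ L atTop) {a b η : ℝ} (ha : 0 < a) (hb : 0 ≤ b)
    (hη : 0 < η) : ∀ᶠ n in L, ∀ u : ℝ, a * τ n ≤ |u| → b * τ n / u ^ 2 ≤ η := by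
  filter_upwards [hτ.eventually_gt_atTop 0, hτ.eventually_ge_atTop (b / (a ^ 2 * η))]
    with n hpos hlarge u hu
  calc b * τ n / u ^ 2 = b * τ n / |u| ^ 2 := by rw [sq_abs]
    _ ≤ b * τ n / (a * τ n) ^ 2 := by gcongr
    _ ≤ η := by
      rw [div_le_iff₀ (by positivity)] at hlarge ⊢
      nlinarith

lemma exists_floor_eq_two_mul_floor_add {a c t : ℝ} (ha : 0 < a) (hc : 0 ≤ c) (hat : 2 ≤ a * t) :
    ∃ i : ℕ, ⌊(c + 4 * a) * t⌋₊ = 2 * ⌊a * t⌋₊ + i ∧ a * t ≤ i - c * t ∧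
      (i : ℝ) / ⌊a * t⌋₊ ≤ 2 * (c + 4 * a) / a := by
  have ht : 0 < t := pos_of_mul_pos_right (two_pos.trans_le hat) ha.le
  set J := ⌊a * t⌋₊
  have hJle : (J : ℝ) ≤ a * t := Nat.floor_le (by positivity)
  have hJge : a * t / 2 ≤ J := by linarith [Nat.sub_one_lt_floor (a * t)]
  have hct : 0 ≤ c * t := by positivity
  obtain ⟨i, hi⟩ : ∃ i, ⌊(c + 4 * a) * t⌋₊ = 2 * J + i := by
    refine Nat.exists_eq_add_of_le (Nat.le_floor ?_)
    push_cast
    linarith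
  have hupper : ((2 * J + i : ℕ) : ℝ) ≤ (c + 4 * a) * t := hi ▸ Nat.floor_le (by positivity)
  have hlower : (c + 4 * a) * t - 1 < ((2 * J + i : ℕ) : ℝ) := hi ▸ Nat.sub_one_lt_floor _
  push_cast at hupper hlower
  refine ⟨i, hi, by linarith, ?_⟩
  rw [div_le_div_iff₀ (by linarith) ha]
  calc i * a ≤ (c + 4 * a) * t * a := by
        gcongr
        linarith
    _ = 2 * (c + 4 * a) * (a * t / 2) := by ring
    _ ≤ 2 * (c + 4 * a) * J := by gcongr

variable {Ω : ι → Type*} [∀ n, Fintype (Ω n)] [∀ n, DecidableEq (Ω n)]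
  {Q : ∀ n, Matrix (Ω n) (Ω n) ℝ} {pi : ∀ n, Ω n → ℝ}

lemma eventually_maxDist_heatKernel_le (hτ : Tendsto τ L atTop) (hQ : ∀ n, IsStochastic (Q n))
    (hpi : ∀ n, IsProbVec (pi n)) (hpiQ : ∀ n, pi n ᵥ* Q n = pi n) {c c' η : ℝ} (hc : 0 < c)
    (hcc' : c < c') (hη : 0 < η) :
    ∀ᶠ n in L, maxDist (heatKernel (Q n) (c' * τ n)) (pi n) ≤
      maxDist (Q n ^ ⌊c * τ n⌋₊) (pi n) + η := by
  filter_upwards [hτ.eventually_gt_atTop 0,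
    eventually_mul_div_sq_le hτ (sub_pos.2 hcc') (hc.trans hcc').le hη] with n hpos herr
  have hfloor : (⌊c * τ n⌋₊ : ℝ) ≤ c * τ n := Nat.floor_le (by positivity)
  have hgap : c * τ n < c' * τ n := by gcongr
  refine (maxDist_heatKernel_le (hQ n) (hpi n) (hpiQ n) (hfloor.trans_lt hgap)).trans ?_
  gcongr
  refine herr _ ?_
  rw [abs_sub_comm, abs_of_pos (sub_pos.2 (hfloor.trans_lt hgap))]
  linarith

/-- By `IsPosContraction.autocov_pow_two_pow_le`, decay of the autocovariance at times of order
`τ n` does not depend on the constant in front of `τ n`. -/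
lemma eventually_autocov_centered_le (hτ : Tendsto τ L atTop) (hQ : ∀ n, IsStochastic (Q n))
    (hpi : ∀ n, IsProbVec (pi n)) (h : ∀ n, IsPosContraction (Q n) (pi n)) {K : ℝ} (hK : 0 < K)
    (hmix : ∀ ε > 0, ∀ᶠ n in L, maxDist (heatKernel (Q n) (K * τ n)) (pi n) ≤ ε)
    {c δ : ℝ} (hc : 0 < c) (hδ : 0 < δ) :
    ∀ᶠ n in L, ∀ g ∈ Set.Icc (0 : Ω n → ℝ) 1,
      autocov (Q n) (pi n) (centered (pi n) g) ⌊c * τ n⌋₊ ≤ δ := by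
  obtain ⟨r, hr⟩ := pow_unbounded_of_one_lt ((2 * K + 1) / c) one_lt_two
  rw [div_lt_iff₀ hc] at hr
  have hδr : 0 < δ ^ 2 ^ r / 2 := by positivity
  filter_upwards [hτ.eventually_gt_atTop 0, hτ.eventually_ge_atTop (2 ^ r), hmix _ hδr,
    eventually_mul_div_sq_le hτ hK hK.le hδr] with n hpos hlarge hheat herr g hg
  have hfloor : c * τ n - 1 ≤ ⌊c * τ n⌋₊ := (Nat.sub_one_lt_floor _).le
  have hlate : 2 * K * τ n ≤ (2 ^ r * ⌊c * τ n⌋₊ : ℕ) := by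
    push_cast
    calc 2 * K * τ n ≤ (2 ^ r * c) * τ n - 2 ^ r := by nlinarith
      _ = 2 ^ r * (c * τ n - 1) := by ring
      _ ≤ 2 ^ r * ⌊c * τ n⌋₊ := by gcongr
  have hKτ : 0 < K * τ n := by positivity
  refine le_of_pow_le_pow_left₀ (pow_ne_zero r two_ne_zero) hδ.le ?_
  calc autocov (Q n) (pi n) (centered (pi n) g) ⌊c * τ n⌋₊ ^ 2 ^ r
      ≤ autocov (Q n) (pi n) (centered (pi n) g) (2 ^ r * ⌊c * τ n⌋₊) :=
        (h n).autocov_pow_two_pow_le (autocov_centered_le_one (hQ n) (hpi n) hg 0) _ r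
    _ ≤ δ ^ 2 ^ r / 2 + δ ^ 2 ^ r / 2 :=
        ((h n).autocov_centered_le (hQ n) (hpi n) hg hKτ.le (by linarith)).trans
          (add_le_add hheat (herr _ ((by linarith : _ ≤ _).trans (le_abs_self _))))
    _ = δ ^ 2 ^ r := add_halves _

lemma eventually_maxDist_pow_le (hτ : Tendsto τ L atTop) (hQ : ∀ n, IsStochastic (Q n))
    (hpi : ∀ n, IsProbVec (pi n)) (h : ∀ n, IsPosContraction (Q n) (pi n)) {K : ℝ} (hK : 0 < K)
    (hmix : ∀ ε > 0, ∀ᶠ n in L, maxDist (heatKernel (Q n) (K * τ n)) (pi n) ≤ ε)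
    {c c' η : ℝ} (hc : 0 < c) (hcc' : c < c') (hη : 0 < η) :
    ∀ᶠ n in L, maxDist (Q n ^ ⌊c' * τ n⌋₊) (pi n) ≤
      maxDist (heatKernel (Q n) (c * τ n)) (pi n) + η := by
  obtain ⟨a, ha, rfl⟩ : ∃ a, 0 < a ∧ c' = c + 4 * a :=
    ⟨(c' - c) / 4, by linarith, by ring⟩
  have hbound : 0 < 1 + 2 * (c + 4 * a) / a := by positivity
  set β := η / 2 / (1 + 2 * (c + 4 * a) / a)
  have hβ : 0 < β := by positivity
  filter_upwards [hτ.eventually_gt_atTop 0, hτ.eventually_ge_atTop (2 / a),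
    eventually_autocov_centered_le hτ hQ hpi h hK hmix ha (sq_pos_of_pos hβ),
    eventually_mul_div_sq_le hτ ha hc.le (half_pos hη)] with n hpos hlarge hcov herr
  have haτ : 2 ≤ a * τ n := (div_le_iff₀' ha).1 hlarge
  have hJ : 0 < ⌊a * τ n⌋₊ := Nat.floor_pos.2 (one_le_two.trans haτ)
  obtain ⟨i, hi, hgap, hwindow⟩ := exists_floor_eq_two_mul_floor_add ha hc.le haτ
  have hmax : β * (1 + i / ⌊a * τ n⌋₊) ≤ η / 2 := by
    calc β * (1 + i / ⌊a * τ n⌋₊) ≤ β * (1 + 2 * (c + 4 * a) / a) := by gcongr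
      _ = η / 2 := div_mul_cancel₀ _ hbound.ne'
  rw [hi]
  linarith [(h n).maxDist_pow_le (hQ n) (hpi n) hJ hβ.le hcov
    (by positivity) (by linarith : c * τ n < i), herr _ (hgap.trans (le_abs_self _))]

theorem cutoffAt_heatKernel_iff_cutoffAt_pow (hτ : Tendsto τ L atTop)
    (hQ : ∀ n, IsStochastic (Q n)) (hpi : ∀ n, IsProbVec (pi n))
    (h : ∀ n, IsPosContraction (Q n) (pi n)) :
    CutoffAt (fun n t => maxDist (heatKernel (Q n) t) (pi n)) τ L ↔
      CutoffAt (fun n t => maxDist (Q n ^ ⌊t⌋₊) (pi n)) τ L := by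
  have hpiQ (n : ι) : pi n ᵥ* Q n = pi n := (h n).isReversible.vecMul_eq (hQ n)
  have hheat_le_pow {c c' η : ℝ} := eventually_maxDist_heatKernel_le hτ hQ hpi hpiQ
    (c := c) (c' := c') (η := η)
  have hpow_le_heat (hmix : ∀ ε > 0, ∀ᶠ n in L, maxDist (heatKernel (Q n) (2 * τ n)) (pi n) ≤ ε)
      {c c' η : ℝ} := eventually_maxDist_pow_le hτ hQ hpi h two_pos hmix
        (c := c) (c' := c') (η := η)
  constructor
  · refine fun hcut => ⟨fun {c} hc {ε} hε => ?_, fun {c} hc0 hc1 {ε} hε => ?_⟩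
    · obtain ⟨b, hb, hbc⟩ := exists_between hc
      filter_upwards [hcut.eventually_le hb (half_pos hε),
        hpow_le_heat (fun ε hε => hcut.eventually_le one_lt_two hε) (zero_lt_one.trans hb) hbc
          (half_pos hε)] with n hle hcomp
      linarith
    · obtain ⟨b, hcb, hb⟩ := exists_between hc1
      filter_upwards [hcut.eventually_ge (hc0.trans hcb) hb (half_pos hε),
        hheat_le_pow hc0 hcb (half_pos hε)] with n hge hcomp
      linarith
  · intro hcut
    have hle {c : ℝ} (hc : 1 < c) {ε : ℝ} (hε : 0 < ε) :
        ∀ᶠ n in L, maxDist (heatKernel (Q n) (c * τ n)) (pi n) ≤ ε := by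
      obtain ⟨b, hb, hbc⟩ := exists_between hc
      filter_upwards [hcut.eventually_le hb (half_pos hε),
        hheat_le_pow (zero_lt_one.trans hb) hbc (half_pos hε)] with n hle hcomp
      linarith
    refine ⟨hle, fun {c} hc0 hc1 {ε} hε => ?_⟩
    obtain ⟨b, hcb, hb⟩ := exists_between hc1
    filter_upwards [hcut.eventually_ge (hc0.trans hcb) hb (half_pos hε),
      hpow_le_heat (fun ε hε => hle one_lt_two hε) hc0 hcb (half_pos hε)] with n hge hcomp
    linarith

end Asymptotics

section ChainCutoff

lemma contCutoff_iff_isCutoff {Ω : ℕ → Type} [∀ n, Fintype (Ω n)] [∀ n, DecidableEq (Ω n)]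
    (P : ∀ n, Matrix (Ω n) (Ω n) ℝ) (pi : ∀ n, Ω n → ℝ) :
    ContCutoff P pi ↔ IsCutoff (fun n t => maxDist (heatKernel (P n) t) (pi n)) atTop := by
  simp only [ContCutoff, contMix, contDistMax_eq_maxDist, IsCutoff, mixTime]

lemma lazyCutoff_iff_isCutoff {Ω : ℕ → Type} [∀ n, Fintype (Ω n)] [∀ n, DecidableEq (Ω n)]
    (P : ∀ n, Matrix (Ω n) (Ω n) ℝ) (pi : ∀ n, Ω n → ℝ) :
    LazyCutoff P pi ↔ IsCutoff (fun n t => maxDist (lazyM (P n) ^ ⌊t⌋₊) (pi n)) atTop := by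
  have hmix (n : ℕ) (ε : ℝ) : (lazyMix (P n) (pi n) ε : ℝ) =
      mixTime (fun t => maxDist (lazyM (P n) ^ ⌊t⌋₊) (pi n)) ε := by
    simp only [lazyMix, lazyDistMax_eq_maxDist, Nat.floor_natCast]
    exact natCast_sInf_eq_mixTime (fun m => maxDist (lazyM (P n) ^ m) (pi n)) ε
  simp only [LazyCutoff, IsCutoff, hmix]

variable {ι : Type*} {L : Filter ι} {Ω : ι → Type*} [∀ n, Fintype (Ω n)]
  [∀ n, DecidableEq (Ω n)] {P : ∀ n, Matrix (Ω n) (Ω n) ℝ} {pi : ∀ n, Ω n → ℝ}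

lemma isCutoff_heatKernel_iff (hP : ∀ n, IsStochastic (P n)) (hpi : ∀ n, IsProbVec (pi n))
    (hpiP : ∀ n, pi n ᵥ* P n = pi n) :
    IsCutoff (fun n t => maxDist (heatKernel (P n) t) (pi n)) L ↔
      ∃ τ, Tendsto τ L atTop ∧
        CutoffAt (fun n t => maxDist (heatKernel (P n) t) (pi n)) τ L := by
  refine isCutoff_iff_exists_cutoffAt
    (fun n => antitoneOn_maxDist_heatKernel (hP n) (hpi n) (hpiP n))
    (ρ := fun t => Real.exp (-t)) (fun t => Real.exp_pos _) fun n t ht => ?_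
  rw [heatKernel_zero]
  exact maxDist_one_add_le ((hP n).heatKernel ht) (hpi n)
    (exp_neg_le_heatKernel_apply_self (hP n) ht)

lemma isCutoff_lazyM_pow_iff (hP : ∀ n, IsStochastic (P n)) (hpi : ∀ n, IsProbVec (pi n))
    (hR : ∀ n, IsReversible (P n) (pi n)) :
    IsCutoff (fun n t => maxDist (lazyM (P n) ^ ⌊t⌋₊) (pi n)) L ↔
      ∃ τ, Tendsto τ L atTop ∧
        CutoffAt (fun n t => maxDist (lazyM (P n) ^ ⌊t⌋₊) (pi n)) τ L := by
  refine isCutoff_iff_exists_cutoffAt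
    (fun n s _ t _ hst => antitone_maxDist_pow (hP n).lazyM (hpi n)
      ((hR n).lazyM.vecMul_eq (hP n).lazyM) (Nat.floor_mono hst))
    (ρ := fun t => (1 / 2) ^ ⌊t⌋₊) (fun t => by positivity) fun n t _ => ?_
  rw [Nat.floor_zero, pow_zero]
  refine maxDist_one_add_le ((hP n).lazyM.pow _) (hpi n) fun x => ?_
  exact (pow_le_pow_left₀ one_half_pos.le (half_le_lazyM_apply_self (hP n) x) _).trans
    ((hP n).lazyM.pow_apply_self_le _ x)

lemma cutoffAt_heatKernel_lazyM_iff (τ : ι → ℝ) :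
    CutoffAt (fun n t => maxDist (heatKernel (lazyM (P n)) t) (pi n)) (fun n => 2 * τ n) L ↔
      CutoffAt (fun n t => maxDist (heatKernel (P n) t) (pi n)) τ L := by
  have htime (n : ι) (c : ℝ) :
      heatKernel (lazyM (P n)) (c * (2 * τ n)) = heatKernel (P n) (c * τ n) := by
    rw [mul_left_comm, heatKernel_lazyM]
  constructor <;> refine fun h => ⟨fun hc _ hε => ?_, fun hc0 hc1 _ hε => ?_⟩
  · simpa only [htime] using h.eventually_le hc hε
  · simpa only [htime] using h.eventually_ge hc0 hc1 hε
  · simpa only [htime] using h.eventually_le hc hε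
  · simpa only [htime] using h.eventually_ge hc0 hc1 hε

end ChainCutoff

theorem contCutoff_iff_lazyCutoff_general {Ω : ℕ → Type} [∀ n, Fintype (Ω n)]
    [∀ n, DecidableEq (Ω n)] {P : ∀ n, Matrix (Ω n) (Ω n) ℝ} {pi : ∀ n, Ω n → ℝ}
    (hP : ∀ n, IsStochastic (P n)) (hpi : ∀ n, IsProbVec (pi n))
    (hR : ∀ n, IsReversible (P n) (pi n)) : ContCutoff P pi ↔ LazyCutoff P pi := by
  have hcompare {τ : ℕ → ℝ} (hτ : Tendsto τ atTop atTop) :=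
    cutoffAt_heatKernel_iff_cutoffAt_pow hτ (fun n => (hP n).lazyM) hpi fun n =>
      isPosContraction_lazyM (hR n) (hP n) (hpi n).1
  rw [contCutoff_iff_isCutoff, lazyCutoff_iff_isCutoff,
    isCutoff_heatKernel_iff hP hpi fun n => (hR n).vecMul_eq (hP n),
    isCutoff_lazyM_pow_iff hP hpi hR]
  constructor
  · rintro ⟨τ, hτ, hcut⟩
    have hτ2 : Tendsto (fun n => 2 * τ n) atTop atTop := hτ.const_mul_atTop two_pos
    exact ⟨_, hτ2, (hcompare hτ2).1 ((cutoffAt_heatKernel_lazyM_iff τ).2 hcut)⟩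
  · rintro ⟨τ, hτ, hcut⟩
    refine ⟨fun n => τ n / 2, hτ.atTop_div_const two_pos,
      (cutoffAt_heatKernel_lazyM_iff _).1 ?_⟩
    simpa only [mul_div_cancel₀ _ (two_ne_zero' ℝ)] using (hcompare hτ).2 hcut

/-- **Corollary 1.5 of Hermon–Peres, (i) ↔ (ii).**
A sequence of finite irreducible reversible Markov chains exhibits a continuous-time cutoff
iff it exhibits a lazy cutoff. -/
theorem contCutoff_iff_lazyCutoff :
    ∀ (Ω : ℕ → Type) [∀ n, Fintype (Ω n)] [∀ n, DecidableEq (Ω n)] [∀ n, Nonempty (Ω n)]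
      (P : ∀ n, Matrix (Ω n) (Ω n) ℝ) (pi : ∀ n, Ω n → ℝ),
      (∀ n, IsRevMC (P n) (pi n)) →
      (ContCutoff P pi ↔ LazyCutoff P pi) := by
  intro Ω _ _ _ P pi h
  exact contCutoff_iff_lazyCutoff_general (fun n => (h n).1.1) (fun n => (h n).1.2.2.1)
    fun n => (h n).2
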